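/- Let k* be an integer with m < k* < N. Assume k_ef + k_si − N + G(k*) ≥ 0 and Γ(k*) ≥ Γ(k*+1). Then Γ(k*) ≥ g_ef(s) for every s with k* < s ≤ N; in particular Γ(k*) ≥ g_ef(k*+1). -/

import Mathlib

open Finset

noncomputable def Hfun (gef gsi gin : ℕ → ℝ) (m k : ℕ) : ℝ :=
  (∑ s ∈ Finset.Icc 1 (min k m), 1 / (gsi s + gin s)) +
    ∑ s ∈ Finset.Icc (m + 1) k, 1 / (gef s + gin s)

noncomputable def Gfun (gef gsi gin : ℕ → ℝ) (m k : ℕ) : ℝ :=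
  (∑ s ∈ Finset.Icc 1 (min k m), gsi s / (gsi s + gin s)) +
    ∑ s ∈ Finset.Icc (m + 1) k, gef s / (gef s + gin s)

noncomputable def Gam (gef gsi gin : ℕ → ℝ) (kef ksi N m k : ℕ) : ℝ :=
  ((kef : ℝ) + (ksi : ℝ) - (N : ℝ) + Gfun gef gsi gin m k) / Hfun gef gsi gin m k

noncomputable def pstar (gef gsi gin : ℕ → ℝ) (m kstar s : ℕ) : ℝ :=
  if s ≤ m then 1 / (Hfun gef gsi gin m kstar * (gsi s + gin s))
  else if s ≤ kstar then 1 / (Hfun gef gsi gin m kstar * (gef s + gin s))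
  else 0

noncomputable def chatEf (gef gsi gin : ℕ → ℝ) (kef ksi N m kstar s : ℕ) : ℝ :=
  if s ≤ m then 0
  else if s ≤ kstar then
    (Gam gef gsi gin kef ksi N m kstar + gin s) / (gef s + gin s)
  else
    ((kef : ℝ) - ∑ u ∈ Finset.Icc (m + 1) kstar,
        (Gam gef gsi gin kef ksi N m kstar + gin u) / (gef u + gin u)) /
      ((N : ℝ) - (kstar : ℝ))

noncomputable def chatSi (gef gsi gin : ℕ → ℝ) (kef ksi N m kstar s : ℕ) : ℝ :=
  if s ≤ m then
    (Gam gef gsi gin kef ksi N m kstar + gin s) / (gsi s + gin s)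
  else if s ≤ kstar then 0
  else
    ((ksi : ℝ) - ∑ u ∈ Finset.Icc 1 m,
        (Gam gef gsi gin kef ksi N m kstar + gin u) / (gsi u + gin u)) /
      ((N : ℝ) - (kstar : ℝ))

noncomputable def chatIn (gef gsi gin : ℕ → ℝ) (kef ksi N m kstar s : ℕ) : ℝ :=
  1 - chatEf gef gsi gin kef ksi N m kstar s - chatSi gef gsi gin kef ksi N m kstar s

noncomputable def zGain (gef gsi gin p cef csi cin : ℕ → ℝ) (N : ℕ) : ℝ :=
  ∑ s ∈ Finset.Icc 1 N, p s * (cef s * gef s + csi s * gsi s - cin s * gin s)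

def memDelta (cef csi cin : ℕ → ℝ) (N kef ksi kin : ℕ) : Prop :=
  (∀ s ∈ Finset.Icc 1 N,
    (cef s = 0 ∨ cef s = 1) ∧ (csi s = 0 ∨ csi s = 1) ∧ (cin s = 0 ∨ cin s = 1) ∧
      cef s + csi s + cin s = 1) ∧
  (∑ s ∈ Finset.Icc 1 N, cef s) = (kef : ℝ) ∧
  (∑ s ∈ Finset.Icc 1 N, csi s) = (ksi : ℝ) ∧
  (∑ s ∈ Finset.Icc 1 N, cin s) = (kin : ℝ)

def memDeltaT (cef csi cin : ℕ → ℝ) (N kef ksi kin : ℕ) : Prop :=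
  (∀ s ∈ Finset.Icc 1 N,
    cef s ∈ Set.Icc (0 : ℝ) 1 ∧ csi s ∈ Set.Icc (0 : ℝ) 1 ∧ cin s ∈ Set.Icc (0 : ℝ) 1 ∧
      cef s + csi s + cin s = 1) ∧
  (∑ s ∈ Finset.Icc 1 N, cef s) = (kef : ℝ) ∧
  (∑ s ∈ Finset.Icc 1 N, csi s) = (ksi : ℝ) ∧
  (∑ s ∈ Finset.Icc 1 N, cin s) = (kin : ℝ)

/-!
Passing from `k` to `k + 1` adds `gef (k + 1) * w` to the numerator of `Γ` and `w` to its
denominator, where `w = 1 / (gef (k + 1) + gin (k + 1)) > 0`. Hence `Γ (k + 1)` is a weighted mean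
of `Γ k` and `gef (k + 1)`, and it does not exceed `Γ k` exactly when `gef (k + 1) ≤ Γ k`. Since
`gef` is decreasing, the later gains are then bounded by `Γ k` as well.
-/

lemma add_mul_div_add_le_div_iff {α : Type*} [Field α] [LinearOrder α] [IsStrictOrderedRing α]
    {a b w x : α} (hb : 0 < b) (hw : 0 < w) :
    (a + x * w) / (b + w) ≤ a / b ↔ x ≤ a / b :=
  calc (a + x * w) / (b + w) ≤ a / b
      ↔ (a + x * w) * b ≤ a * (b + w) := div_le_div_iff₀ (add_pos hb hw) hb
    _ ↔ x * b * w ≤ a * w := by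
      rw [add_mul, mul_add, add_le_add_iff_left, mul_right_comm]
    _ ↔ x * b ≤ a := mul_le_mul_iff_left₀ hw
    _ ↔ x ≤ a / b := (le_div_iff₀ hb).symm

section

variable {gef gsi gin : ℕ → ℝ} {m k : ℕ}

lemma Hfun_succ (hmk : m ≤ k) :
    Hfun gef gsi gin m (k + 1) =
      Hfun gef gsi gin m k + 1 / (gef (k + 1) + gin (k + 1)) := by
  simp only [Hfun, min_eq_right hmk, min_eq_right (hmk.trans k.le_succ),
    sum_Icc_succ_top (Nat.succ_le_succ hmk), add_assoc]

lemma Gfun_succ (hmk : m ≤ k) :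
    Gfun gef gsi gin m (k + 1) =
      Gfun gef gsi gin m k + gef (k + 1) / (gef (k + 1) + gin (k + 1)) := by
  simp only [Gfun, min_eq_right hmk, min_eq_right (hmk.trans k.le_succ),
    sum_Icc_succ_top (Nat.succ_le_succ hmk), add_assoc]

lemma Hfun_pos (hk : 0 < k) (hsi : ∀ s ∈ Icc 1 (min k m), 0 < gsi s + gin s)
    (hef : ∀ s ∈ Icc (m + 1) k, 0 < gef s + gin s) :
    0 < Hfun gef gsi gin m k := by
  have hsi_inv : ∀ s ∈ Icc 1 (min k m), 0 < 1 / (gsi s + gin s) :=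
    fun s hs ↦ one_div_pos.mpr (hsi s hs)
  have hef_inv : ∀ s ∈ Icc (m + 1) k, 0 < 1 / (gef s + gin s) :=
    fun s hs ↦ one_div_pos.mpr (hef s hs)
  rcases lt_or_ge m k with hmk | hkm
  · exact add_pos_of_nonneg_of_pos (sum_nonneg fun s hs ↦ (hsi_inv s hs).le)
      (sum_pos hef_inv (nonempty_Icc.mpr hmk))
  · exact add_pos_of_pos_of_nonneg
      (sum_pos hsi_inv (nonempty_Icc.mpr (le_min hk (hk.trans_le hkm))))
      (sum_nonneg fun s hs ↦ (hef_inv s hs).le)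

lemma Gam_succ_le_iff {kef ksi N : ℕ} (hk : 0 < k) (hmk : m ≤ k)
    (hsi : ∀ s ∈ Icc 1 m, 0 < gsi s + gin s)
    (hef : ∀ s ∈ Icc (m + 1) (k + 1), 0 < gef s + gin s) :
    Gam gef gsi gin kef ksi N m (k + 1) ≤ Gam gef gsi gin kef ksi N m k ↔
      gef (k + 1) ≤ Gam gef gsi gin kef ksi N m k := by
  have hH : 0 < Hfun gef gsi gin m k :=
    Hfun_pos hk (fun s hs ↦ hsi s (Icc_subset_Icc_right (min_le_right k m) hs))
      fun s hs ↦ hef s (Icc_subset_Icc_right k.le_succ hs)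
  have hw : 0 < 1 / (gef (k + 1) + gin (k + 1)) :=
    one_div_pos.mpr (hef _ (right_mem_Icc.mpr (Nat.succ_le_succ hmk)))
  simp only [Gam, Hfun_succ hmk, Gfun_succ hmk, ← add_assoc]
  rw [← mul_one_div (gef (k + 1))]
  exact add_mul_div_add_le_div_iff hH hw

end

theorem stmt_10_general {gef gsi gin : ℕ → ℝ} {N kef ksi m k : ℕ} (hk : 0 < k) (hmk : m ≤ k)
    (hsi : ∀ s ∈ Icc 1 m, 0 < gsi s + gin s)
    (hef : ∀ s ∈ Icc (m + 1) (k + 1), 0 < gef s + gin s)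
    (hanti : AntitoneOn gef (Set.Icc (k + 1) N))
    (hΓ : Gam gef gsi gin kef ksi N m (k + 1) ≤ Gam gef gsi gin kef ksi N m k) :
    ∀ s ∈ Set.Icc (k + 1) N, gef s ≤ Gam gef gsi gin kef ksi N m k := fun s hs ↦
  calc gef s ≤ gef (k + 1) := hanti (Set.left_mem_Icc.mpr (hs.1.trans hs.2)) hs hs.1
    _ ≤ Gam gef gsi gin kef ksi N m k := (Gam_succ_le_iff hk hmk hsi hef).mp hΓ

theorem stmt_10
    (gef gsi gin : ℕ → ℝ) (N kef ksi kin m kstar : ℕ)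
    (hN : 0 < N) (hm : m = ksi + kin) (hsum : kef + ksi + kin = N)
    (hgef : ∀ s ∈ Finset.Icc 1 N, 0 < gef s)
    (hgsi : ∀ s ∈ Finset.Icc 1 N, 0 < gsi s)
    (hgin : ∀ s ∈ Finset.Icc 1 N, 0 < gin s)
    (hsilt : ∀ s ∈ Finset.Icc 1 N, gsi s < gef s)
    (hinlt : ∀ s ∈ Finset.Icc 1 N, gin s < gef s)
    (hdec : ∀ s ∈ Finset.Icc 1 N, ∀ t ∈ Finset.Icc 1 N, s < t → gef t < gef s)
    (hk1 : m < kstar) (hk2 : kstar < N)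
    (hGpos : 0 ≤ (kef : ℝ) + (ksi : ℝ) - (N : ℝ) + Gfun gef gsi gin m kstar)
    (hmono : Gam gef gsi gin kef ksi N m (kstar + 1) ≤ Gam gef gsi gin kef ksi N m kstar) :
    (∀ s : ℕ, kstar < s → s ≤ N → gef s ≤ Gam gef gsi gin kef ksi N m kstar) ∧
    gef (kstar + 1) ≤ Gam gef gsi gin kef ksi N m kstar := by
  have hsi : ∀ s ∈ Icc 1 m, 0 < gsi s + gin s := fun s hs ↦
    have hsN := Icc_subset_Icc_right (hk1.trans hk2).le hs
    add_pos (hgsi s hsN) (hgin s hsN)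
  have hef : ∀ s ∈ Icc (m + 1) (kstar + 1), 0 < gef s + gin s := fun s hs ↦
    have hsN := Icc_subset_Icc (Nat.le_add_left 1 m) hk2 hs
    add_pos (hgef s hsN) (hgin s hsN)
  have hanti : StrictAntiOn gef (Set.Icc (kstar + 1) N) := fun s hs t ht ↦
    hdec s (mem_Icc.mpr ⟨kstar.succ_pos.trans_le hs.1, hs.2⟩)
      t (mem_Icc.mpr ⟨kstar.succ_pos.trans_le ht.1, ht.2⟩)
  have hbound := stmt_10_general (Nat.zero_lt_of_lt hk1) hk1.le hsi hef hanti.antitoneOn hmono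
  exact ⟨fun s hks hsN ↦ hbound s ⟨hks, hsN⟩, hbound _ ⟨le_rfl, hk2⟩⟩
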